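/- Let Σ be a set and f : ℘(Σ) → ℘(Σ) a function preserving arbitrary unions (an additive function, such as the predecessor operator pre of a transition relation). Then for every Moore family 𝒜 on Σ: D(M({f(X) : X ∈ D(𝒜)})) = D(M({f(X) : X ∈ 𝒜})). (That is, the disjunctive-completion abstraction is backward complete for the operator 𝒳 ↦ M(f(𝒳)).) -/

import Mathlib

universe u v

variable {X : Type u} {A : Type v}

/-- A Moore family: a collection of subsets closed under arbitrary intersections. -/
def IsMoore (M : Set (Set X)) : Prop := ∀ S ⊆ M, ⋂₀ S ∈ M

/-- The least Moore family containing `C`. -/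
def mClose (C : Set (Set X)) : Set (Set X) := ⋂₀ {M | IsMoore M ∧ C ⊆ M}

/-- A disjunctive Moore family: additionally closed under arbitrary unions. -/
def IsDisjMoore (M : Set (Set X)) : Prop := IsMoore M ∧ ∀ S ⊆ M, ⋃₀ S ∈ M

/-- The least disjunctive Moore family containing `C`. -/
def dClose (C : Set (Set X)) : Set (Set X) := ⋂₀ {M | IsDisjMoore M ∧ C ⊆ M}

/-- The closure operator associated with a Moore family. -/
def mu (M : Set (Set X)) (S : Set X) : Set X := ⋂₀ {T | T ∈ M ∧ S ⊆ T}

/-- The partition (as a setoid) induced by a Moore family: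
`s ≡ s'` iff `μ {s} = μ {s'}`. -/
def prS (M : Set (Set X)) : Setoid X :=
  ⟨fun s t => mu M {s} = mu M {t}, ⟨fun _ => rfl, Eq.symm, Eq.trans⟩⟩

/-- The Moore family of all `P`-saturated sets (unions of blocks of `P`). -/
def padS (P : Setoid X) : Set (Set X) := {S | ∀ s ∈ S, ∀ t, P.r s t → t ∈ S}

/-- `P` refines `Q`: every block of `P` is contained in a block of `Q`. -/
def refines (P Q : Setoid X) : Prop := ∀ s t, P.r s t → Q.r s t

/-- A finitary operation on `℘(X)`: an arity `n` together with a map `℘(X)^n → ℘(X)`. -/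
abbrev Op (X : Type u) := (n : ℕ) × ((Fin n → Set X) → Set X)

/-- The image `F(S)` of a set of operations on a collection of subsets. -/
def imageF (F : Set (Op X)) (S : Set (Set X)) : Set (Set X) :=
  {T | ∃ f ∈ F, ∃ args : Fin f.1 → Set X, (∀ i, args i ∈ S) ∧ T = f.2 args}

/-- Forward `F`-completeness: `F(S) ⊆ S`. -/
def FComplete (F : Set (Op X)) (S : Set (Set X)) : Prop := imageF F S ⊆ S

/-- The forward `F`-complete shell: the least forward `F`-complete Moore family
containing `M`. -/
def shellF (F : Set (Op X)) (M : Set (Set X)) : Set (Set X) :=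
  ⋂₀ {B | IsMoore B ∧ FComplete F B ∧ M ⊆ B}

/-- Predecessor operator of a transition relation. -/
def preR (r : X → X → Prop) (S : Set X) : Set X := {s | ∃ t ∈ S, r s t}

/-- The split of a partition `P` by a set `T`: blocks are the nonempty sets
among `B ∩ T` and `B \ T` for blocks `B` of `P`. -/
def splitS (T : Set X) (P : Setoid X) : Setoid X :=
  ⟨fun s t => P.r s t ∧ (s ∈ T ↔ t ∈ T),
   ⟨fun s => ⟨P.iseqv.refl s, Iff.rfl⟩,
    fun h => ⟨P.iseqv.symm h.1, h.2.symm⟩,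
    fun h1 h2 => ⟨P.iseqv.trans h1.1 h2.1, h1.2.trans h2.2⟩⟩⟩

/-- Abstract refinement: `refine_f^A(S, a) = α(M(γ(a) ∪ {f(S)}))`. -/
def refineA [Preorder A] (al : Set (Set X) → A) (ga : A → Set (Set X))
    (f : Op X) (S : Fin f.1 → Set X) (a : A) : A :=
  al (mClose (ga a ∪ {f.2 S}))

/-- Abstract refiners: tuples in `γ(a)^n` whose refinement is strictly below `a`. -/
def refinersA [Preorder A] (al : Set (Set X) → A) (ga : A → Set (Set X))
    (f : Op X) (a : A) : Set (Fin f.1 → Set X) :=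
  {S | (∀ i, S i ∈ ga a) ∧ refineA al ga f S a < a}

/-- One step of the GPT algorithm: refine by some refiner of some `f ∈ F`. -/
def StepA [Preorder A] (F : Set (Op X)) (al : Set (Set X) → A) (ga : A → Set (Set X))
    (a b : A) : Prop :=
  ∃ f ∈ F, ∃ S : Fin f.1 → Set X, S ∈ refinersA al ga f a ∧ b = refineA al ga f S a

/-- The setoid induced by a collection of sets: `s ≡ t` iff no set of the
collection separates them. -/
def indSetoid (C : Set (Set X)) : Setoid X :=
  ⟨fun s t => ∀ T ∈ C, (s ∈ T ↔ t ∈ T),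
   ⟨fun _ _ _ => Iff.rfl, fun h T hT => (h T hT).symm,
    fun h1 h2 T hT => (h1 T hT).trans (h2 T hT)⟩⟩

/-- The block of `P` containing `s`. -/
def blockOf (P : Setoid X) (s : X) : Set X := {t | P.r s t}

/-- The existential-until operator `EU(S₁, S₂)`. -/
def EUset (r : X → X → Prop) (S1 S2 : Set X) : Set X :=
  S2 ∪ {s | s ∈ S1 ∧ ∃ (n : ℕ) (p : ℕ → X), p 0 = s ∧
    (∀ i < n, p i ∈ S1 ∧ r (p i) (p (i+1))) ∧ p n ∈ S2}

/-!
Over a Moore family `M`, every `S ∈ dClose M` is the union of the sets `mu M {s}` for `s ∈ S`, all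
of which lie in `M`. An additive `f` therefore maps `S` to a union of members of `f '' M`, while the
inner Moore closures are absorbed by `dClose`.
-/

section Closure

variable {C D M N : Set (Set X)}

theorem subset_mClose (C : Set (Set X)) : C ⊆ mClose C :=
  Set.subset_sInter fun _ hM => hM.2

theorem subset_dClose (C : Set (Set X)) : C ⊆ dClose C :=
  Set.subset_sInter fun _ hM => hM.2

theorem IsMoore.mClose_subset (hM : IsMoore M) (hC : C ⊆ M) : mClose C ⊆ M :=
  Set.sInter_subset_of_mem ⟨hM, hC⟩

theorem IsDisjMoore.dClose_subset (hN : IsDisjMoore N) (hC : C ⊆ N) : dClose C ⊆ N :=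
  Set.sInter_subset_of_mem ⟨hN, hC⟩

theorem isDisjMoore_dClose (C : Set (Set X)) : IsDisjMoore (dClose C) :=
  ⟨fun _ hS N hN => hN.1.1 _ fun _ hT => hS hT N hN,
    fun _ hS N hN => hN.1.2 _ fun _ hT => hS hT N hN⟩

theorem dClose_mono (h : C ⊆ D) : dClose C ⊆ dClose D :=
  (isDisjMoore_dClose D).dClose_subset (h.trans (subset_dClose D))

theorem dClose_mClose (C : Set (Set X)) : dClose (mClose C) = dClose C := by
  have hD : IsDisjMoore (dClose C) := isDisjMoore_dClose C
  exact (hD.dClose_subset (hD.1.mClose_subset (subset_dClose C))).antisymm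
    (dClose_mono (subset_mClose C))

end Closure

section Mu

variable {M : Set (Set X)} {S T : Set X}

theorem subset_mu (M : Set (Set X)) (S : Set X) : S ⊆ mu M S :=
  Set.subset_sInter fun _ hT => hT.2

theorem mu_subset (hT : T ∈ M) (hST : S ⊆ T) : mu M S ⊆ T :=
  Set.sInter_subset_of_mem ⟨hT, hST⟩

theorem IsMoore.mu_mem (hM : IsMoore M) (S : Set X) : mu M S ∈ M :=
  hM _ fun _ hT => hT.1

theorem isDisjMoore_setOf_mu_singleton_subset (M : Set (Set X)) :
    IsDisjMoore {S | ∀ s ∈ S, mu M {s} ⊆ S} :=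
  ⟨fun _ hC s hs => Set.subset_sInter fun T hT => hC hT s (hs T hT),
    fun _ hC s ⟨T, hT, hs⟩ => Set.subset_sUnion_of_subset _ T (hC hT s hs) hT⟩

theorem mu_singleton_subset_of_mem_dClose (hS : S ∈ dClose M) {s : X} (hs : s ∈ S) :
    mu M {s} ⊆ S :=
  (isDisjMoore_setOf_mu_singleton_subset M).dClose_subset
    (fun _ hT _ ht => mu_subset hT (Set.singleton_subset_iff.2 ht)) hS s hs

theorem sUnion_image_mu_singleton_of_mem_dClose (hS : S ∈ dClose M) :
    ⋃₀ ((fun s => mu M {s}) '' S) = S := by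
  refine Set.Subset.antisymm ?_ fun s hs => ?_
  · exact Set.sUnion_subset (Set.forall_mem_image.2 fun _ => mu_singleton_subset_of_mem_dClose hS)
  · exact ⟨mu M {s}, Set.mem_image_of_mem _ hs, subset_mu M {s} rfl⟩

theorem IsMoore.mem_dClose_iff (hM : IsMoore M) : S ∈ dClose M ↔ ∃ C ⊆ M, ⋃₀ C = S := by
  constructor
  · intro hS
    exact ⟨_, Set.image_subset_iff.2 fun s _ => hM.mu_mem {s},
      sUnion_image_mu_singleton_of_mem_dClose hS⟩
  · rintro ⟨C, hC, rfl⟩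
    exact (isDisjMoore_dClose M).2 C (hC.trans (subset_dClose M))

end Mu

section Additive

variable {Y : Type*} {f : Set X → Set Y} {M : Set (Set X)}

theorem IsMoore.image_dClose_subset (hM : IsMoore M)
    (hf : ∀ C ⊆ M, f (⋃₀ C) = ⋃ S ∈ C, f S) : f '' dClose M ⊆ dClose (f '' M) := by
  rintro _ ⟨S, hS, rfl⟩
  obtain ⟨C, hC, rfl⟩ := hM.mem_dClose_iff.1 hS
  rw [hf C hC, ← Set.sUnion_image]
  exact (isDisjMoore_dClose _).2 _ ((Set.image_mono hC).trans (subset_dClose _))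

theorem IsMoore.dClose_image_dClose (hM : IsMoore M)
    (hf : ∀ C ⊆ M, f (⋃₀ C) = ⋃ S ∈ C, f S) : dClose (f '' dClose M) = dClose (f '' M) :=
  ((isDisjMoore_dClose _).dClose_subset (hM.image_dClose_subset hf)).antisymm
    (dClose_mono (Set.image_mono (subset_dClose M)))

end Additive

theorem stmt17_general {Y : Type*} (f : Set X → Set Y) (M : Set (Set X))
    (hf : ∀ C ⊆ M, f (⋃₀ C) = ⋃ S ∈ C, f S) (hM : IsMoore M) :
    dClose (mClose (f '' dClose M)) = dClose (mClose (f '' M)) := by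
  rw [dClose_mClose, dClose_mClose, hM.dClose_image_dClose hf]

theorem stmt17 (f : Set X → Set X)
    (hf : ∀ C : Set (Set X), f (⋃₀ C) = ⋃ S ∈ C, f S)
    (M : Set (Set X)) (hM : IsMoore M) :
    dClose (mClose (f '' dClose M)) = dClose (mClose (f '' M)) := by
  exact stmt17_general f M (fun C _ => hf C) hM
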